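/- arXiv:1511.05321 — 3 statements merged into one kernel-verified Lean document; each statement's English description precedes it below -/
import Mathlib

section
/- Let q₀ be a positive real number and μ ∈ ℂ with Re μ > 0, and assume θ₂(iν) ≠ 0, θ₃(iν) ≠ 0 and θ₄(iν) ≠ 0 for every ν with Re ν > 0. Then: w₁[q₀](i/μ) = −μ² w₃[1/q₀](iμ); w₁'[q₀](i/μ) = μ⁴ w₃'[1/q₀](iμ) + 2μ³ w₃[1/q₀](iμ); w₁''[q₀](i/μ) = −μ⁶ w₃''[1/q₀](iμ) − 6μ⁵ w₃'[1/q₀](iμ) − 6μ⁴ w₃[1/q₀](iμ); w₁⁽³⁾[q₀](i/μ) = μ⁸ w₃⁽³⁾[1/q₀](iμ) + 12μ⁷ w₃''[1/q₀](iμ) + 36μ⁶ w₃'[1/q₀](iμ) + 24μ⁵ w₃[1/q₀](iμ); w₁⁽⁴⁾[q₀](i/μ) = −μ¹⁰ w₃⁽⁴⁾[1/q₀](iμ) − 20μ⁹ w₃⁽³⁾[1/q₀](iμ) − 120μ⁸ w₃''[1/q₀](iμ) − 240μ⁷ w₃'[1/q₀](iμ) − 120μ⁶ w₃[1/q₀](iμ).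 -/
noncomputable section

/-- The theta function with characteristics `θ[p,q](iμ)`. -/
def theta (p q μ : ℂ) : ℂ :=
  ∑' m : ℤ, Complex.exp (-(Real.pi : ℂ) * ((m : ℂ) + p) ^ 2 * μ +
    2 * (Real.pi : ℂ) * Complex.I * ((m : ℂ) + p) * q)

/-- The characteristic derivative `∂qθ[p,q](iμ)`. -/
def thetaQ (p q μ : ℂ) : ℂ :=
  2 * (Real.pi : ℂ) * Complex.I *
    ∑' m : ℤ, ((m : ℂ) + p) * Complex.exp (-(Real.pi : ℂ) * ((m : ℂ) + p) ^ 2 * μ +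
      2 * (Real.pi : ℂ) * Complex.I * ((m : ℂ) + p) * q)

/-- The n-th μ-derivative `∂μⁿθ[p,q](iμ)`, given by its absolutely convergent series. -/
def thetaD (n : ℕ) (p q μ : ℂ) : ℂ :=
  (-(Real.pi : ℂ)) ^ n *
    ∑' m : ℤ, ((m : ℂ) + p) ^ (2 * n) *
      Complex.exp (-(Real.pi : ℂ) * ((m : ℂ) + p) ^ 2 * μ +
        2 * (Real.pi : ℂ) * Complex.I * ((m : ℂ) + p) * q)

/-- The n-th μ-derivative `∂μⁿ∂qθ[p,q](iμ)`, given by its absolutely convergent series. -/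
def thetaQD (n : ℕ) (p q μ : ℂ) : ℂ :=
  2 * Complex.I * (-1 : ℂ) ^ n * (Real.pi : ℂ) ^ (n + 1) *
    ∑' m : ℤ, ((m : ℂ) + p) ^ (2 * n + 1) *
      Complex.exp (-(Real.pi : ℂ) * ((m : ℂ) + p) ^ 2 * μ +
        2 * (Real.pi : ℂ) * Complex.I * ((m : ℂ) + p) * q)

/-- The constant `C(j|n) = (−i)ⁿ n! / (2ʲ (n−2j)! (2j)!!)` with `(2j)!! = 2ʲ j!`. -/
def Ccoef (j n : ℕ) : ℂ :=
  (-Complex.I) ^ n * (n.factorial : ℂ) /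
    ((2 : ℂ) ^ j * ((n - 2 * j).factorial : ℂ) * ((2 : ℂ) ^ j * (j.factorial : ℂ)))

/-- `w₁[p,q](iμ)` of the two-parametric family. -/
def w1 (p q μ : ℂ) : ℂ :=
  -(Complex.I / 2) * theta 0 0 μ * theta 0 (1 / 2) μ * thetaQ p (q + 1 / 2) μ /
    (Complex.exp ((Real.pi : ℂ) * Complex.I * p) * theta p q μ)

/-- `w₂[p,q](iμ)` of the two-parametric family. -/
def w2 (p q μ : ℂ) : ℂ :=
  (Complex.I / 2) * theta (1 / 2) 0 μ * theta 0 (1 / 2) μ *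
    thetaQ (p + 1 / 2) (q + 1 / 2) μ /
    (Complex.exp ((Real.pi : ℂ) * Complex.I * p) * theta p q μ)

/-- `w₃[p,q](iμ)` of the two-parametric family. -/
def w3 (p q μ : ℂ) : ℂ :=
  -(1 / 2 : ℂ) * theta (1 / 2) 0 μ * theta 0 0 μ * thetaQ (p + 1 / 2) q μ / theta p q μ

/-- The conformal factor `F[p,q](iμ)` of the two-parametric family. -/
def Ftwo (Λ p q μ : ℂ) : ℂ :=
  (2 / ((Real.pi : ℂ) * Λ)) * (theta p q μ / thetaQ p q μ) ^ 2

/-- `w₁[q₀](iμ)` of the one-parametric family. -/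
def v1 (q0 μ : ℂ) : ℂ := 1 / (μ + q0) + 2 * thetaD 1 (1 / 2) 0 μ / theta (1 / 2) 0 μ

/-- `w₂[q₀](iμ)` of the one-parametric family. -/
def v2 (q0 μ : ℂ) : ℂ := 1 / (μ + q0) + 2 * thetaD 1 0 0 μ / theta 0 0 μ

/-- `w₃[q₀](iμ)` of the one-parametric family. -/
def v3 (q0 μ : ℂ) : ℂ := 1 / (μ + q0) + 2 * thetaD 1 0 (1 / 2) μ / theta 0 (1 / 2) μ

/-- The conformal factor `F[q₀](iμ) = C(μ+q₀)²` of the one-parametric family. -/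
def Fone (C q0 μ : ℂ) : ℂ := C * (μ + q0) ^ 2

/-- The Seeley–de Witt coefficient `ã₀[p,q](iμ)` of the two-parametric family. -/
def a0two (Λ p q μ : ℂ) : ℂ :=
  4 * Ftwo Λ p q μ ^ 2 * w1 p q μ * w2 p q μ * w3 p q μ

/-- The Seeley–de Witt coefficient `ã₀[q₀](iμ)` of the one-parametric family. -/
def a0one (C q0 μ : ℂ) : ℂ :=
  4 * Fone C q0 μ ^ 2 * v1 q0 μ * v2 q0 μ * v3 q0 μ

/-- The Seeley–de Witt coefficient `ã₂[p,q](iμ)` of the two-parametric family. -/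
def a2two (Λ p q μ : ℂ) : ℂ :=
  -(Ftwo Λ p q μ / 3) * (w1 p q μ ^ 2 + w2 p q μ ^ 2 + w3 p q μ ^ 2) +
  (Ftwo Λ p q μ / 6) *
    ((w1 p q μ ^ 2 * w2 p q μ ^ 2 - deriv (w3 p q) μ ^ 2) / w3 p q μ ^ 2 +
     (w1 p q μ ^ 2 * w3 p q μ ^ 2 - deriv (w2 p q) μ ^ 2) / w2 p q μ ^ 2 +
     (w2 p q μ ^ 2 * w3 p q μ ^ 2 - deriv (w1 p q) μ ^ 2) / w1 p q μ ^ 2) -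
  (Ftwo Λ p q μ / 3) *
    (deriv (w1 p q) μ * deriv (w2 p q) μ / (w1 p q μ * w2 p q μ) +
     deriv (w1 p q) μ * deriv (w3 p q) μ / (w1 p q μ * w3 p q μ) +
     deriv (w2 p q) μ * deriv (w3 p q) μ / (w2 p q μ * w3 p q μ)) +
  (Ftwo Λ p q μ / 3) *
    (iteratedDeriv 2 (w1 p q) μ / w1 p q μ + iteratedDeriv 2 (w2 p q) μ / w2 p q μ +
     iteratedDeriv 2 (w3 p q) μ / w3 p q μ) -
  deriv (Ftwo Λ p q) μ ^ 2 / (2 * Ftwo Λ p q μ) + iteratedDeriv 2 (Ftwo Λ p q) μ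



lemma aux_norm_term (p q : ℝ) (m : ℤ) (ν : ℂ) :
    ‖Complex.exp (-(Real.pi : ℂ) * ((m : ℂ) + p) ^ 2 * ν +
      2 * (Real.pi : ℂ) * Complex.I * ((m : ℂ) + p) * q)‖ =
    Real.exp (-Real.pi * (m + p) ^ 2 * ν.re) := by
  rw [Complex.norm_exp]
  congr 1
  have e : (-(Real.pi : ℂ) * ((m : ℂ) + p) ^ 2 * ν +
      2 * (Real.pi : ℂ) * Complex.I * ((m : ℂ) + p) * q) =
      ((-Real.pi * (m + p) ^ 2 : ℝ) : ℂ) * ν + ((2 * Real.pi * (m + p) * q : ℝ) : ℂ) * Complex.I := by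
    push_cast; ring
  rw [e, Complex.add_re, Complex.re_ofReal_mul, Complex.re_ofReal_mul]
  simp

lemma aux_isOpen : IsOpen {ν : ℂ | 0 < ν.re} := isOpen_lt continuous_const Complex.continuous_re

lemma aux_hasDerivAt (p q : ℝ) {μ : ℂ} (hμ : 0 < μ.re) :
    HasDerivAt (theta p q) (thetaD 1 p q μ) μ := by
  set r := μ.re / 2 with hr
  have hr0 : 0 < r := by positivity
  have hU : IsOpen {ν : ℂ | r < ν.re} := isOpen_lt continuous_const Complex.continuous_re
  have hμU : μ ∈ {ν : ℂ | r < ν.re} := by simp only [Set.mem_ofPred_eq]; linarith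
  have hd : ∀ (m : ℤ) (ν : ℂ), HasDerivAt (fun ν : ℂ => Complex.exp (-(Real.pi : ℂ) * ((m : ℂ) + p) ^ 2 * ν +
      2 * (Real.pi : ℂ) * Complex.I * ((m : ℂ) + p) * q))
      (Complex.exp (-(Real.pi : ℂ) * ((m : ℂ) + p) ^ 2 * ν +
      2 * (Real.pi : ℂ) * Complex.I * ((m : ℂ) + p) * q) * (-(Real.pi : ℂ) * ((m : ℂ) + p) ^ 2)) ν := by
    intro m ν
    have := (((hasDerivAt_id ν).const_mul (-(Real.pi : ℂ) * ((m : ℂ) + p) ^ 2)).add_const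
      (2 * (Real.pi : ℂ) * Complex.I * ((m : ℂ) + p) * q)).cexp
    simpa using this
  have hsum : Summable (fun m : ℤ => Real.exp (-Real.pi * (m + p) ^ 2 * r)) := by
    have := HurwitzKernelBounds.summable_f_int 0 p hr0
    refine this.congr fun m => ?_
    simp [HurwitzKernelBounds.f_int]
  have hdo : ∀ m : ℤ, DifferentiableOn ℂ (fun ν : ℂ => Complex.exp (-(Real.pi : ℂ) * ((m : ℂ) + p) ^ 2 * ν +
      2 * (Real.pi : ℂ) * Complex.I * ((m : ℂ) + p) * q)) {ν : ℂ | r < ν.re} :=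
    fun m ν _ => (hd m ν).differentiableAt.differentiableWithinAt
  have hle : ∀ (m : ℤ) (ν : ℂ), ν ∈ {ν : ℂ | r < ν.re} →
      ‖Complex.exp (-(Real.pi : ℂ) * ((m : ℂ) + p) ^ 2 * ν +
      2 * (Real.pi : ℂ) * Complex.I * ((m : ℂ) + p) * q)‖ ≤ Real.exp (-Real.pi * (m + p) ^ 2 * r) := by
    intro m ν hν
    rw [aux_norm_term]
    apply Real.exp_le_exp.mpr
    have h1 : 0 ≤ Real.pi * ((m : ℝ) + p) ^ 2 := by positivity
    have h2 : r < ν.re := hν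
    nlinarith
  have h1 := Complex.differentiableOn_tsum_of_summable_norm hsum hdo hU hle
  have h2 := Complex.hasSum_deriv_of_summable_norm hsum hdo hU hle hμU
  have h3 := (h1.differentiableAt (hU.mem_nhds hμU)).hasDerivAt
  rw [← h2.tsum_eq] at h3
  have h4 : thetaD 1 p q μ = ∑' m : ℤ, deriv (fun ν : ℂ => Complex.exp (-(Real.pi : ℂ) * ((m : ℂ) + p) ^ 2 * ν +
      2 * (Real.pi : ℂ) * Complex.I * ((m : ℂ) + p) * q)) μ := by
    rw [thetaD, ← tsum_mul_left]
    refine tsum_congr fun m => ?_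
    rw [(hd m μ).deriv]
    ring
  rw [h4]
  exact h3

lemma aux_theta_diff (p q : ℝ) : DifferentiableOn ℂ (theta p q) {ν : ℂ | 0 < ν.re} :=
  fun _ hν => (aux_hasDerivAt p q hν).differentiableAt.differentiableWithinAt

lemma aux_thetaD_diff (p q : ℝ) : DifferentiableOn ℂ (thetaD 1 p q) {ν : ℂ | 0 < ν.re} :=
  ((aux_theta_diff p q).deriv aux_isOpen).congr fun _ hν => (aux_hasDerivAt p q hν).deriv.symm

lemma aux_inv_re {μ : ℂ} (hμ : 0 < μ.re) : 0 < (1 / μ).re := by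
  have h0 : μ ≠ 0 := by rintro rfl; simp at hμ
  rw [one_div, Complex.inv_re]
  exact div_pos hμ (Complex.normSq_pos.mpr h0)

lemma aux_functional {μ : ℂ} (hμ : 0 < μ.re) :
    theta ((1 / 2 : ℝ) : ℂ) ((0 : ℝ) : ℂ) (1 / μ) =
      μ ^ (1 / 2 : ℂ) * theta ((0 : ℝ) : ℂ) ((1 / 2 : ℝ) : ℂ) μ := by
  have h0 : μ ≠ 0 := by rintro rfl; simp at hμ
  have hI := Complex.I_ne_zero
  have e4 : theta ((0 : ℝ) : ℂ) ((1 / 2 : ℝ) : ℂ) μ = jacobiTheta₂ (1 / 2) (Complex.I * μ) := by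
    unfold theta jacobiTheta₂ jacobiTheta₂_term
    refine tsum_congr fun m => ?_
    congr 1
    push_cast
    linear_combination (- (Real.pi : ℂ) * m ^ 2 * μ) * Complex.I_sq
  have e2 : theta ((1 / 2 : ℝ) : ℂ) ((0 : ℝ) : ℂ) (1 / μ) =
      Complex.exp (-(Real.pi : ℂ) / (4 * μ)) *
        jacobiTheta₂ (Complex.I / (2 * μ)) (Complex.I / μ) := by
    unfold theta jacobiTheta₂ jacobiTheta₂_term
    rw [← tsum_mul_left]
    refine tsum_congr fun m => ?_
    rw [← Complex.exp_add]
    congr 1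
    push_cast
    field_simp
    linear_combination (-16 * (m : ℂ) - 16 * (m : ℂ) ^ 2) * Complex.I_sq
  have hz : (1 / 2 : ℂ) / (Complex.I * μ) = -(Complex.I / (2 * μ)) := by
    field_simp
    simp
  have ht : (-1 : ℂ) / (Complex.I * μ) = Complex.I / μ := by
    field_simp
    simp
  have hs : -Complex.I * (Complex.I * μ) = μ := by
    linear_combination (-μ) * Complex.I_sq
  have hE : -(Real.pi : ℂ) * Complex.I * (1 / 2) ^ 2 / (Complex.I * μ) =
      -(Real.pi : ℂ) / (4 * μ) := by
    field_simp
    norm_num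
  rw [e4, e2, jacobiTheta₂_functional_equation (1 / 2) (Complex.I * μ), hz, ht, hs, jacobiTheta₂_neg_left, hE]
  have hp : μ ^ (1 / 2 : ℂ) ≠ 0 := by simp [Complex.cpow_eq_zero_iff, h0]
  field_simp

/-- Chain rule for `F (1/ν) = G ν` on the right half-plane. -/
lemma aux_step {F : ℂ → ℂ} (hF : DifferentiableOn ℂ F {ν : ℂ | 0 < ν.re})
    {G : ℂ → ℂ} (h : ∀ ν : ℂ, 0 < ν.re → F (1 / ν) = G ν) {G' μ : ℂ} (hμ : 0 < μ.re)
    (hG : HasDerivAt G G' μ) : deriv F (1 / μ) = -μ ^ 2 * G' := by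
  have h0 : μ ≠ 0 := by rintro rfl; simp at hμ
  have hF1 : HasDerivAt F (deriv F (1 / μ)) (1 / μ) :=
    (hF.differentiableAt (aux_isOpen.mem_nhds (aux_inv_re hμ))).hasDerivAt
  have hi : HasDerivAt (fun ν : ℂ => 1 / ν) (-(μ ^ 2)⁻¹) μ := by
    simpa using hasDerivAt_inv h0
  have hc := hF1.comp μ hi
  have hG2 : HasDerivAt (F ∘ fun ν : ℂ => 1 / ν) G' μ :=
    hG.congr_of_eventuallyEq (by
      filter_upwards [aux_isOpen.mem_nhds hμ] with ν hν using h ν hν)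
  have := hc.unique hG2
  rw [← this]
  field_simp

lemma aux_iter {F : ℂ → ℂ} (hF : DifferentiableOn ℂ F {ν : ℂ | 0 < ν.re}) (n : ℕ) :
    DifferentiableOn ℂ (iteratedDeriv n F) {ν : ℂ | 0 < ν.re} := by
  induction n with
  | zero => simpa using hF
  | succ n ih => rw [iteratedDeriv_succ]; exact ih.deriv aux_isOpen

lemma aux_iter_hasDerivAt {F : ℂ → ℂ} (hF : DifferentiableOn ℂ F {ν : ℂ | 0 < ν.re}) (n : ℕ)
    {μ : ℂ} (hμ : 0 < μ.re) :
    HasDerivAt (iteratedDeriv n F) (iteratedDeriv (n + 1) F μ) μ := by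
  rw [iteratedDeriv_succ]
  exact ((aux_iter hF n).differentiableAt (aux_isOpen.mem_nhds hμ)).hasDerivAt

lemma aux_term {F : ℂ → ℂ} (hF : DifferentiableOn ℂ F {ν : ℂ | 0 < ν.re}) (n k : ℕ) (c : ℂ)
    {μ : ℂ} (hμ : 0 < μ.re) :
    HasDerivAt (fun ν => c * ν ^ k * iteratedDeriv n F ν)
      (c * (k * μ ^ (k - 1)) * iteratedDeriv n F μ + c * μ ^ k * iteratedDeriv (n + 1) F μ) μ :=
  ((hasDerivAt_pow k μ).const_mul c).mul (aux_iter_hasDerivAt hF n hμ)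

lemma aux_chain {F G : ℂ → ℂ} (hF : DifferentiableOn ℂ F {ν : ℂ | 0 < ν.re})
    (hG : DifferentiableOn ℂ G {ν : ℂ | 0 < ν.re})
    (h : ∀ ν : ℂ, 0 < ν.re → F (1 / ν) = -ν ^ 2 * G ν) {μ : ℂ} (hμ : 0 < μ.re) :
    iteratedDeriv 1 F (1 / μ) = μ ^ 4 * iteratedDeriv 1 G μ + 2 * μ ^ 3 * G μ ∧
    iteratedDeriv 2 F (1 / μ) = -μ ^ 6 * iteratedDeriv 2 G μ -
          6 * μ ^ 5 * iteratedDeriv 1 G μ - 6 * μ ^ 4 * G μ ∧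
    iteratedDeriv 3 F (1 / μ) = μ ^ 8 * iteratedDeriv 3 G μ +
          12 * μ ^ 7 * iteratedDeriv 2 G μ +
          36 * μ ^ 6 * iteratedDeriv 1 G μ + 24 * μ ^ 5 * G μ ∧
    iteratedDeriv 4 F (1 / μ) = -μ ^ 10 * iteratedDeriv 4 G μ -
          20 * μ ^ 9 * iteratedDeriv 3 G μ -
          120 * μ ^ 8 * iteratedDeriv 2 G μ -
          240 * μ ^ 7 * iteratedDeriv 1 G μ -
          120 * μ ^ 6 * G μ := by
  have E0 : ∀ ν : ℂ, 0 < ν.re → iteratedDeriv 0 F (1 / ν) = (-1) * ν ^ 2 * iteratedDeriv 0 G ν := by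
    intro ν hν
    rw [iteratedDeriv_zero, iteratedDeriv_zero, h ν hν]; ring
  have E1 : ∀ ν : ℂ, 0 < ν.re → iteratedDeriv 1 F (1 / ν) =
      1 * ν ^ 4 * iteratedDeriv 1 G ν + 2 * ν ^ 3 * iteratedDeriv 0 G ν := by
    intro ν hν
    rw [iteratedDeriv_succ, aux_step (aux_iter hF 0) E0 hν (aux_term hG 0 2 (-1) hν)]
    push_cast; ring
  have E2 : ∀ ν : ℂ, 0 < ν.re → iteratedDeriv 2 F (1 / ν) =
      (-1) * ν ^ 6 * iteratedDeriv 2 G ν + (-6) * ν ^ 5 * iteratedDeriv 1 G ν +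
        (-6) * ν ^ 4 * iteratedDeriv 0 G ν := by
    intro ν hν
    rw [iteratedDeriv_succ, aux_step (aux_iter hF 1) E1 hν
      ((aux_term hG 1 4 1 hν).add (aux_term hG 0 3 2 hν))]
    push_cast; ring
  have E3 : ∀ ν : ℂ, 0 < ν.re → iteratedDeriv 3 F (1 / ν) =
      1 * ν ^ 8 * iteratedDeriv 3 G ν + 12 * ν ^ 7 * iteratedDeriv 2 G ν +
        36 * ν ^ 6 * iteratedDeriv 1 G ν + 24 * ν ^ 5 * iteratedDeriv 0 G ν := by
    intro ν hν
    rw [iteratedDeriv_succ, aux_step (aux_iter hF 2) E2 hν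
      (((aux_term hG 2 6 (-1) hν).add (aux_term hG 1 5 (-6) hν)).add (aux_term hG 0 4 (-6) hν))]
    push_cast; ring
  have E4 : iteratedDeriv 4 F (1 / μ) = -μ ^ 10 * iteratedDeriv 4 G μ -
          20 * μ ^ 9 * iteratedDeriv 3 G μ -
          120 * μ ^ 8 * iteratedDeriv 2 G μ -
          240 * μ ^ 7 * iteratedDeriv 1 G μ -
          120 * μ ^ 6 * iteratedDeriv 0 G μ := by
    rw [iteratedDeriv_succ, aux_step (aux_iter hF 3) E3 hμ
      ((((aux_term hG 3 8 1 hμ).add (aux_term hG 2 7 12 hμ)).add (aux_term hG 1 6 36 hμ)).add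
        (aux_term hG 0 5 24 hμ))]
    push_cast; ring
  have e1 := E1 μ hμ
  have e2 := E2 μ hμ
  have e3 := E3 μ hμ
  simp only [iteratedDeriv_zero] at e1 e2 e3 E4
  refine ⟨?_, ?_, ?_, E4⟩
  · rw [e1]; ring
  · rw [e2]; ring
  · rw [e3]; ring

lemma aux_v_diff (p q c : ℝ) (hc : 0 < c)
    (h : ∀ ν : ℂ, 0 < ν.re → theta p q ν ≠ 0) :
    DifferentiableOn ℂ (fun ν => 1 / (ν + (c : ℂ)) + 2 * thetaD 1 p q ν / theta p q ν)
      {ν : ℂ | 0 < ν.re} := by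
  refine DifferentiableOn.add ?_ ?_
  · refine DifferentiableOn.div (by fun_prop) (by fun_prop) ?_
    intro ν hν h0
    have h1 := congrArg Complex.re h0
    have h2 : 0 < ν.re := hν
    simp at h1
    linarith
  · exact ((aux_thetaD_diff p q).const_mul 2).div (aux_theta_diff p q) h

lemma aux_main (q0 : ℝ) (hq0 : 0 < q0) (μ : ℂ) (hμ : 0 < μ.re)
    (h2 : ∀ ν : ℂ, 0 < ν.re → theta ((1 / 2 : ℝ) : ℂ) ((0 : ℝ) : ℂ) ν ≠ 0)
    (h4 : ∀ ν : ℂ, 0 < ν.re → theta ((0 : ℝ) : ℂ) ((1 / 2 : ℝ) : ℂ) ν ≠ 0) :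
    1 / (1 / μ + (q0 : ℂ)) + 2 * thetaD 1 ((1 / 2 : ℝ) : ℂ) ((0 : ℝ) : ℂ) (1 / μ) /
        theta ((1 / 2 : ℝ) : ℂ) ((0 : ℝ) : ℂ) (1 / μ) =
      -μ ^ 2 * (1 / (μ + 1 / (q0 : ℂ)) + 2 * thetaD 1 ((0 : ℝ) : ℂ) ((1 / 2 : ℝ) : ℂ) μ /
        theta ((0 : ℝ) : ℂ) ((1 / 2 : ℝ) : ℂ) μ) := by
  have h0 : μ ≠ 0 := by rintro rfl; simp at hμ
  have hs : μ ∈ Complex.slitPlane := Or.inl hμ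
  have hp : μ ^ (1 / 2 : ℂ) ≠ 0 := by simp [Complex.cpow_eq_zero_iff, h0]
  have hpow : HasDerivAt (fun ν : ℂ => ν ^ (1 / 2 : ℂ)) (1 / 2 * (μ ^ (1 / 2 : ℂ) / μ)) μ := by
    have := (hasDerivAt_id μ).cpow_const (c := (1 / 2 : ℂ)) hs
    simpa [Complex.cpow_sub _ _ h0] using this
  have hD := aux_step (aux_theta_diff (1 / 2) 0)
    (fun ν hν => aux_functional hν) hμ (hpow.mul (aux_hasDerivAt 0 (1 / 2) hμ))
  rw [(aux_hasDerivAt (1 / 2) 0 (aux_inv_re hμ)).deriv] at hD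
  have hq : (q0 : ℂ) ≠ 0 := by exact_mod_cast hq0.ne'
  have hq1 : μ * (q0 : ℂ) + 1 ≠ 0 := by
    intro hh
    have h1 := congrArg Complex.re hh
    simp at h1
    nlinarith [mul_pos hμ hq0]
  have hq2 : 1 + μ * (q0 : ℂ) ≠ 0 := by rwa [add_comm]
  have ha : 1 / (1 / μ + (q0 : ℂ)) = μ / (μ * q0 + 1) := by
    have : 1 / μ + (q0 : ℂ) = (μ * q0 + 1) / μ := by field_simp; ring
    rw [this, one_div_div]
  have hb : 1 / (μ + 1 / (q0 : ℂ)) = q0 / (μ * q0 + 1) := by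
    have : μ + 1 / (q0 : ℂ) = (μ * q0 + 1) / q0 := by field_simp
    rw [this, one_div_div]
  rw [hD, aux_functional hμ, ha, hb]
  have ht := h4 μ hμ
  generalize theta ((0 : ℝ) : ℂ) ((1 / 2 : ℝ) : ℂ) μ = T at *
  generalize thetaD 1 ((0 : ℝ) : ℂ) ((1 / 2 : ℝ) : ℂ) μ = D at *
  generalize μ ^ (1 / 2 : ℂ) = S at *
  field_simp
  ring

/-- Lemma 6.2: behavior of `w₁[q₀]` and its μ-derivatives up to order 4 under
`iμ ↦ i/μ`, expressed through `w₃[1/q₀]`. -/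
theorem statement12 (q0 : ℝ) (hq0 : 0 < q0) (μ : ℂ) (hμ : 0 < μ.re)
    (h2 : ∀ ν : ℂ, 0 < ν.re → theta (1 / 2) 0 ν ≠ 0)
    (h3 : ∀ ν : ℂ, 0 < ν.re → theta 0 0 ν ≠ 0)
    (h4 : ∀ ν : ℂ, 0 < ν.re → theta 0 (1 / 2) ν ≠ 0) :
    v1 (q0 : ℂ) (1 / μ) = -μ ^ 2 * v3 (1 / (q0 : ℂ)) μ ∧
    iteratedDeriv 1 (v1 (q0 : ℂ)) (1 / μ) =
        μ ^ 4 * iteratedDeriv 1 (v3 (1 / (q0 : ℂ))) μ + 2 * μ ^ 3 * v3 (1 / (q0 : ℂ)) μ ∧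
    iteratedDeriv 2 (v1 (q0 : ℂ)) (1 / μ) =
        -μ ^ 6 * iteratedDeriv 2 (v3 (1 / (q0 : ℂ))) μ -
          6 * μ ^ 5 * iteratedDeriv 1 (v3 (1 / (q0 : ℂ))) μ - 6 * μ ^ 4 * v3 (1 / (q0 : ℂ)) μ ∧
    iteratedDeriv 3 (v1 (q0 : ℂ)) (1 / μ) =
        μ ^ 8 * iteratedDeriv 3 (v3 (1 / (q0 : ℂ))) μ +
          12 * μ ^ 7 * iteratedDeriv 2 (v3 (1 / (q0 : ℂ))) μ +
          36 * μ ^ 6 * iteratedDeriv 1 (v3 (1 / (q0 : ℂ))) μ + 24 * μ ^ 5 * v3 (1 / (q0 : ℂ)) μ ∧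
    iteratedDeriv 4 (v1 (q0 : ℂ)) (1 / μ) =
        -μ ^ 10 * iteratedDeriv 4 (v3 (1 / (q0 : ℂ))) μ -
          20 * μ ^ 9 * iteratedDeriv 3 (v3 (1 / (q0 : ℂ))) μ -
          120 * μ ^ 8 * iteratedDeriv 2 (v3 (1 / (q0 : ℂ))) μ -
          240 * μ ^ 7 * iteratedDeriv 1 (v3 (1 / (q0 : ℂ))) μ -
          120 * μ ^ 6 * v3 (1 / (q0 : ℂ)) μ := by
  have c0 : ((0 : ℝ) : ℂ) = 0 := Complex.ofReal_zero
  have c1 : ((1 / 2 : ℝ) : ℂ) = 1 / 2 := by push_cast; rfl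
  have cq : ((1 / q0 : ℝ) : ℂ) = 1 / (q0 : ℂ) := by push_cast; rfl
  have hq' : 0 < 1 / q0 := by positivity
  have d1 := aux_v_diff (1 / 2) 0 q0 hq0 (by rw [c0, c1]; exact h2)
  have d3 := aux_v_diff 0 (1 / 2) (1 / q0) hq' (by rw [c0, c1]; exact h4)
  have hm := fun ν hν => aux_main q0 hq0 ν hν (by rw [c0, c1]; exact h2) (by rw [c0, c1]; exact h4)
  rw [c0, c1] at d1 d3 hm
  rw [cq] at d3
  exact ⟨hm μ hμ, aux_chain (F := v1 (q0 : ℂ)) (G := v3 (1 / (q0 : ℂ))) d1 d3 hm hμ⟩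

end
end

section
/- Let p, q ∈ ℂ and μ ∈ ℂ with Re μ > 0. Then ã₀[p,q](iμ+1) = ã₀[p,q+p+1/2](iμ). Moreover, if θ[−q,p](iμ) ≠ 0 and ∂qθ[−q,p](iμ) ≠ 0, then ã₀[p,q](i/μ) = −μ² ã₀[−q,p](iμ). -/
noncomputable section

lemma theta_eq_J (p q μ : ℂ) : theta p q μ =
    Complex.exp (-(Real.pi : ℂ) * p ^ 2 * μ + 2 * (Real.pi : ℂ) * Complex.I * p * q) *
      jacobiTheta₂ (q + Complex.I * p * μ) (Complex.I * μ) := by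
  unfold theta jacobiTheta₂ jacobiTheta₂_term
  rw [← tsum_mul_left]
  congr 1
  funext m
  rw [← Complex.exp_add]
  congr 1
  linear_combination (-(2 * (Real.pi : ℂ) * m * p * μ + Real.pi * m ^ 2 * μ)) * Complex.I_sq

lemma thetaQ_eq_J (p q μ : ℂ) (hμ : 0 < μ.re) : thetaQ p q μ =
    Complex.exp (-(Real.pi : ℂ) * p ^ 2 * μ + 2 * (Real.pi : ℂ) * Complex.I * p * q) *
      (jacobiTheta₂' (q + Complex.I * p * μ) (Complex.I * μ) +
        2 * (Real.pi : ℂ) * Complex.I * p *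
          jacobiTheta₂ (q + Complex.I * p * μ) (Complex.I * μ)) := by
  have hτ : 0 < (Complex.I * μ).im := by simpa using hμ
  have h1 := hasSum_jacobiTheta₂'_term (q + Complex.I * p * μ) hτ
  have h2 := hasSum_jacobiTheta₂_term (q + Complex.I * p * μ) hτ
  have h3 := (h1.add (h2.mul_left (2 * (Real.pi : ℂ) * Complex.I * p))).mul_left
    (Complex.exp (-(Real.pi : ℂ) * p ^ 2 * μ + 2 * (Real.pi : ℂ) * Complex.I * p * q))
  rw [← h3.tsum_eq, thetaQ, ← tsum_mul_left]
  congr 1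
  funext m
  unfold jacobiTheta₂'_term jacobiTheta₂_term
  have : Complex.exp (-(Real.pi : ℂ) * ((m : ℂ) + p) ^ 2 * μ +
      2 * (Real.pi : ℂ) * Complex.I * ((m : ℂ) + p) * q) =
      Complex.exp (-(Real.pi : ℂ) * p ^ 2 * μ + 2 * (Real.pi : ℂ) * Complex.I * p * q) *
      Complex.exp (2 * (Real.pi : ℂ) * Complex.I * m * (q + Complex.I * p * μ) +
        Real.pi * Complex.I * m ^ 2 * (Complex.I * μ)) := by
    rw [← Complex.exp_add]
    congr 1
    linear_combination (-(2 * (Real.pi : ℂ) * m * p * μ + Real.pi * m ^ 2 * μ)) * Complex.I_sq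
  rw [this]
  ring

/-- S-transformation of theta. -/
lemma theta_S (p q μ : ℂ) (hμ : 0 < μ.re) : theta p q (1 / μ) =
    μ ^ (1 / 2 : ℂ) * Complex.exp (2 * (Real.pi : ℂ) * Complex.I * p * q) * theta (-q) p μ := by
  have h0 : μ ≠ 0 := by rintro rfl; simp at hμ
  have hs : μ ^ (1 / 2 : ℂ) ≠ 0 := by simp [Complex.cpow_eq_zero_iff, h0]
  rw [theta_eq_J, theta_eq_J, jacobiTheta₂_functional_equation (p + Complex.I * -q * μ)]
  have e1 : -Complex.I * (Complex.I * μ) = μ := by linear_combination (-μ) * Complex.I_sq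
  have e2 : (p + Complex.I * -q * μ) / (Complex.I * μ) = -(q + Complex.I * p * (1 / μ)) := by
    field_simp
    linear_combination p * Complex.I_sq
  have e3 : -1 / (Complex.I * μ) = Complex.I * (1 / μ) := by
    field_simp
    linear_combination - Complex.I_sq
  rw [e1, e2, e3, jacobiTheta₂_neg_left]
  have e4 : Complex.exp (-(Real.pi : ℂ) * p ^ 2 * (1 / μ) + 2 * (Real.pi : ℂ) * Complex.I * p * q) =
      Complex.exp (2 * (Real.pi : ℂ) * Complex.I * p * q) *
      Complex.exp (-(Real.pi : ℂ) * (-q) ^ 2 * μ + 2 * (Real.pi : ℂ) * Complex.I * (-q) * p) *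
      Complex.exp (-(Real.pi : ℂ) * Complex.I * (p + Complex.I * -q * μ) ^ 2 / (Complex.I * μ)) := by
    rw [← Complex.exp_add, ← Complex.exp_add]
    congr 1
    field_simp
    linear_combination (q ^ 2 * μ ^ 2) * Complex.I_sq
  rw [e4]
  field_simp

lemma thetaQ_S (p q μ : ℂ) (hμ : 0 < μ.re) : thetaQ p q (1 / μ) =
    -Complex.I * μ * μ ^ (1 / 2 : ℂ) * Complex.exp (2 * (Real.pi : ℂ) * Complex.I * p * q) *
      thetaQ (-q) p μ := by
  have h0 : μ ≠ 0 := by rintro rfl; simp at hμ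
  have hs : μ ^ (1 / 2 : ℂ) ≠ 0 := by simp [Complex.cpow_eq_zero_iff, h0]
  have hμ' : 0 < (1 / μ).re := by
    rw [one_div, Complex.inv_re]
    exact div_pos hμ (Complex.normSq_pos.mpr h0)
  rw [thetaQ_eq_J _ _ _ hμ', thetaQ_eq_J _ _ _ hμ,
    jacobiTheta₂_functional_equation (p + Complex.I * -q * μ),
    jacobiTheta₂'_functional_equation (p + Complex.I * -q * μ)]
  have e1 : -Complex.I * (Complex.I * μ) = μ := by linear_combination (-μ) * Complex.I_sq
  have e2 : (p + Complex.I * -q * μ) / (Complex.I * μ) = -(q + Complex.I * p * (1 / μ)) := by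
    field_simp
    linear_combination p * Complex.I_sq
  have e3 : -1 / (Complex.I * μ) = Complex.I * (1 / μ) := by
    field_simp
    linear_combination - Complex.I_sq
  rw [e1, e2, e3, jacobiTheta₂_neg_left, jacobiTheta₂'_neg_left]
  have e4 : Complex.exp (-(Real.pi : ℂ) * p ^ 2 * (1 / μ) + 2 * (Real.pi : ℂ) * Complex.I * p * q) =
      Complex.exp (2 * (Real.pi : ℂ) * Complex.I * p * q) *
      Complex.exp (-(Real.pi : ℂ) * (-q) ^ 2 * μ + 2 * (Real.pi : ℂ) * Complex.I * (-q) * p) *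
      Complex.exp (-(Real.pi : ℂ) * Complex.I * (p + Complex.I * -q * μ) ^ 2 / (Complex.I * μ)) := by
    rw [← Complex.exp_add, ← Complex.exp_add]
    congr 1
    field_simp
    linear_combination (q ^ 2 * μ ^ 2) * Complex.I_sq
  rw [e4]
  generalize jacobiTheta₂ _ _ = J
  generalize jacobiTheta₂' _ _ = J'
  field_simp
  ring_nf
  try simp only [Complex.I_sq]
  try ring

lemma term_T (p q μ : ℂ) (m : ℤ) :
    Complex.exp (-(Real.pi : ℂ) * ((m : ℂ) + p) ^ 2 * (μ - Complex.I) +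
      2 * (Real.pi : ℂ) * Complex.I * ((m : ℂ) + p) * q) =
    Complex.exp (-(Real.pi : ℂ) * Complex.I * (p * (p + 1))) *
    Complex.exp (-(Real.pi : ℂ) * ((m : ℂ) + p) ^ 2 * μ +
      2 * (Real.pi : ℂ) * Complex.I * ((m : ℂ) + p) * (q + p + 1 / 2)) := by
  rw [← Complex.exp_add, Complex.exp_eq_exp_iff_exists_int]
  obtain ⟨k, hk⟩ := Int.even_mul_pred_self m
  refine ⟨k, ?_⟩
  have hk' : (m : ℂ) * (m - 1) = k + k := by exact_mod_cast hk
  linear_combination (Real.pi * Complex.I) * hk'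

lemma theta_T (p q μ : ℂ) : theta p q (μ - Complex.I) =
    Complex.exp (-(Real.pi : ℂ) * Complex.I * (p * (p + 1))) * theta p (q + p + 1 / 2) μ := by
  unfold theta
  simp_rw [term_T]
  rw [tsum_mul_left]

lemma thetaQ_T (p q μ : ℂ) : thetaQ p q (μ - Complex.I) =
    Complex.exp (-(Real.pi : ℂ) * Complex.I * (p * (p + 1))) * thetaQ p (q + p + 1 / 2) μ := by
  unfold thetaQ
  simp_rw [term_T, mul_left_comm _ (Complex.exp (-(Real.pi : ℂ) * Complex.I * (p * (p + 1))))]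
  rw [tsum_mul_left]
  ring

lemma term_q (p q μ : ℂ) (m : ℤ) :
    Complex.exp (-(Real.pi : ℂ) * ((m : ℂ) + p) ^ 2 * μ +
      2 * (Real.pi : ℂ) * Complex.I * ((m : ℂ) + p) * (q + 1)) =
    Complex.exp (2 * (Real.pi : ℂ) * Complex.I * p) *
    Complex.exp (-(Real.pi : ℂ) * ((m : ℂ) + p) ^ 2 * μ +
      2 * (Real.pi : ℂ) * Complex.I * ((m : ℂ) + p) * q) := by
  rw [← Complex.exp_add, Complex.exp_eq_exp_iff_exists_int]
  exact ⟨m, by ring⟩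

lemma theta_q (p q μ : ℂ) : theta p (q + 1) μ =
    Complex.exp (2 * (Real.pi : ℂ) * Complex.I * p) * theta p q μ := by
  unfold theta
  simp_rw [term_q]
  rw [tsum_mul_left]

lemma thetaQ_q (p q μ : ℂ) : thetaQ p (q + 1) μ =
    Complex.exp (2 * (Real.pi : ℂ) * Complex.I * p) * thetaQ p q μ := by
  unfold thetaQ
  simp_rw [term_q, mul_left_comm _ (Complex.exp (2 * (Real.pi : ℂ) * Complex.I * p))]
  rw [tsum_mul_left]
  ring

lemma theta_p (p q μ : ℂ) : theta (p + 1) q μ = theta p q μ := by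
  unfold theta
  rw [← (Equiv.addRight (1 : ℤ)).tsum_eq (fun m : ℤ => Complex.exp (-(Real.pi : ℂ) *
    ((m : ℂ) + p) ^ 2 * μ + 2 * (Real.pi : ℂ) * Complex.I * ((m : ℂ) + p) * q))]
  congr 1
  funext m
  simp only [Equiv.coe_addRight, Int.cast_add, Int.cast_one]
  ring_nf

lemma thetaQ_p (p q μ : ℂ) : thetaQ (p + 1) q μ = thetaQ p q μ := by
  unfold thetaQ
  rw [← (Equiv.addRight (1 : ℤ)).tsum_eq (fun m : ℤ => ((m : ℂ) + p) * Complex.exp (-(Real.pi : ℂ) *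
    ((m : ℂ) + p) ^ 2 * μ + 2 * (Real.pi : ℂ) * Complex.I * ((m : ℂ) + p) * q))]
  congr 2
  funext m
  simp only [Equiv.coe_addRight, Int.cast_add, Int.cast_one]
  ring_nf

lemma a0two_eq (Λ p q μ : ℂ) : a0two Λ p q μ =
    -(2 / ((Real.pi : ℂ) * Λ ^ 2 * Real.pi)) *
      (theta (1 / 2) 0 μ * theta 0 0 μ * theta 0 (1 / 2) μ) ^ 2 *
      (thetaQ p (q + 1 / 2) μ * thetaQ (p + 1 / 2) (q + 1 / 2) μ * thetaQ (p + 1 / 2) q μ) *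
      theta p q μ * Complex.exp (-(2 * (Real.pi : ℂ) * Complex.I * p)) *
      (thetaQ p q μ)⁻¹ ^ 4 := by
  have e : Complex.exp (-(2 * (Real.pi : ℂ) * Complex.I * p)) =
      (Complex.exp ((Real.pi : ℂ) * Complex.I * p))⁻¹ ^ 2 := by
    rw [← Complex.exp_neg, ← Complex.exp_nat_mul]
    congr 1
    push_cast
    ring
  have e5 : theta p q μ ^ 4 * (theta p q μ)⁻¹ ^ 3 = theta p q μ := by
    by_cases h : theta p q μ = 0
    · simp [h]
    · field_simp
  unfold a0two Ftwo w1 w2 w3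
  rw [e]
  simp only [div_eq_mul_inv, mul_inv]
  conv_rhs => rw [← e5]
  linear_combination (2 * (Real.pi : ℂ)⁻¹ ^ 2 * Λ⁻¹ ^ 2 *
      (theta (1 * 2⁻¹) 0 μ * theta 0 0 μ * theta 0 (1 * 2⁻¹) μ) ^ 2 *
      (thetaQ p (q + 1 * 2⁻¹) μ * thetaQ (p + 1 * 2⁻¹) (q + 1 * 2⁻¹) μ * thetaQ (p + 1 * 2⁻¹) q μ) *
      theta p q μ ^ 4 * (theta p q μ)⁻¹ ^ 3 *
      (Complex.exp ((Real.pi : ℂ) * Complex.I * p))⁻¹ ^ 2 *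
      (thetaQ p q μ)⁻¹ ^ 4) * Complex.I_sq

/-- Modular transformation properties of the Seeley–de Witt coefficient
`ã₀[p,q] = 4F²w₁w₂w₃` of the two-parametric family under `iμ ↦ iμ+1` and `iμ ↦ i/μ`. -/
theorem statement16 (Λ : ℂ) (hΛ : Λ ≠ 0) (p q μ : ℂ) (hμ : 0 < μ.re) :
    a0two Λ p q (μ - Complex.I) = a0two Λ p (q + p + 1 / 2) μ ∧
    (theta (-q) p μ ≠ 0 → thetaQ (-q) p μ ≠ 0 →
      a0two Λ p q (1 / μ) = -μ ^ 2 * a0two Λ (-q) p μ) := by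
  have hI : Complex.exp ((Real.pi : ℂ) / 2 * Complex.I) = Complex.I := Complex.exp_pi_div_two_mul_I
  constructor
  · rw [a0two_eq, a0two_eq]
    simp only [theta_T, thetaQ_T]
    have t2 : theta (1 / 2) (0 + 1 / 2 + 1 / 2) μ =
        Complex.exp (2 * (Real.pi : ℂ) * Complex.I * (1 / 2)) * theta (1 / 2) 0 μ := by
      rw [← theta_q]; congr 1; ring
    have t3 : theta 0 (0 + 0 + 1 / 2) μ = theta 0 (1 / 2) μ := by congr 1; ring
    have t4 : theta 0 (1 / 2 + 0 + 1 / 2) μ = theta 0 0 μ := by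
      have := theta_q 0 0 μ
      simp only [mul_zero, Complex.exp_zero, one_mul] at this
      rw [← this]; congr 1; ring
    have s1 : thetaQ p (q + 1 / 2 + p + 1 / 2) μ = thetaQ p (q + p + 1 / 2 + 1 / 2) μ := by
      congr 1; ring
    have s2 : thetaQ (p + 1 / 2) (q + 1 / 2 + (p + 1 / 2) + 1 / 2) μ =
        Complex.exp (2 * (Real.pi : ℂ) * Complex.I * (p + 1 / 2)) *
          thetaQ (p + 1 / 2) (q + p + 1 / 2) μ := by
      rw [← thetaQ_q]; congr 1; ring
    have s3 : thetaQ (p + 1 / 2) (q + (p + 1 / 2) + 1 / 2) μ =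
        thetaQ (p + 1 / 2) (q + p + 1 / 2 + 1 / 2) μ := by
      congr 1; ring
    rw [t2, t3, t4, s1, s2, s3]
    have key : (Complex.exp (-(Real.pi : ℂ) * Complex.I * (1 / 2 * (1 / 2 + 1))) *
        Complex.exp (2 * (Real.pi : ℂ) * Complex.I * (1 / 2)) *
        Complex.exp (-(Real.pi : ℂ) * Complex.I * (0 * (0 + 1))) *
        Complex.exp (-(Real.pi : ℂ) * Complex.I * (0 * (0 + 1)))) ^ 2 *
        (Complex.exp (-(Real.pi : ℂ) * Complex.I * (p * (p + 1))) *
        Complex.exp (-(Real.pi : ℂ) * Complex.I * ((p + 1 / 2) * (p + 1 / 2 + 1))) *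
        Complex.exp (2 * (Real.pi : ℂ) * Complex.I * (p + 1 / 2)) *
        Complex.exp (-(Real.pi : ℂ) * Complex.I * ((p + 1 / 2) * (p + 1 / 2 + 1)))) *
        Complex.exp (-(Real.pi : ℂ) * Complex.I * (p * (p + 1))) *
        (Complex.exp (-(Real.pi : ℂ) * Complex.I * (p * (p + 1))))⁻¹ ^ 4 = 1 := by
      simp only [← Complex.exp_neg, ← Complex.exp_nat_mul, ← Complex.exp_add]
      rw [Complex.exp_eq_one_iff]
      refine ⟨0, ?_⟩
      push_cast
      ring
    rw [mul_inv]
    generalize Complex.exp (-(2 * (Real.pi : ℂ) * Complex.I * p)) = E at *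
    linear_combination (-(2 / ((Real.pi : ℂ) * Λ ^ 2 * Real.pi)) *
      (theta (1 / 2) 0 μ * theta 0 0 μ * theta 0 (1 / 2) μ) ^ 2 *
      (thetaQ p (q + p + 1 / 2 + 1 / 2) μ * thetaQ (p + 1 / 2) (q + p + 1 / 2 + 1 / 2) μ *
        thetaQ (p + 1 / 2) (q + p + 1 / 2) μ) *
      theta p (q + p + 1 / 2) μ * E * (thetaQ p (q + p + 1 / 2) μ)⁻¹ ^ 4) * key
  · intro _ _
    have h0 : μ ≠ 0 := by rintro rfl; simp at hμ
    have hs : μ ^ (1 / 2 : ℂ) ≠ 0 := by simp [Complex.cpow_eq_zero_iff, h0]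
    have hs2 : (μ ^ (1 / 2 : ℂ)) ^ 2 = μ := by
      rw [← Complex.cpow_nat_mul]; norm_num
    rw [a0two_eq, a0two_eq]
    simp only [theta_S _ _ _ hμ, thetaQ_S _ _ _ hμ]
    have t2 : theta (-(1 / 2)) 0 μ = theta (1 / 2) 0 μ := by
      rw [← theta_p]; congr 1; ring
    have s1 (r : ℂ) : thetaQ (-(q + 1 / 2)) r μ = thetaQ (-q + 1 / 2) r μ := by
      rw [← thetaQ_p]; congr 1; ring
    rw [t2, s1, s1, neg_zero]
    generalize μ ^ (1 / 2 : ℂ) = s at *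
    have key : (Complex.exp (2 * (Real.pi : ℂ) * Complex.I * (1 / 2) * 0) *
        Complex.exp (2 * (Real.pi : ℂ) * Complex.I * 0 * 0) *
        Complex.exp (2 * (Real.pi : ℂ) * Complex.I * 0 * (1 / 2))) ^ 2 *
        (Complex.exp (2 * (Real.pi : ℂ) * Complex.I * p * (q + 1 / 2)) *
        Complex.exp (2 * (Real.pi : ℂ) * Complex.I * (p + 1 / 2) * (q + 1 / 2)) *
        Complex.exp (2 * (Real.pi : ℂ) * Complex.I * (p + 1 / 2) * q)) *
        Complex.exp (2 * (Real.pi : ℂ) * Complex.I * p * q) *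
        Complex.exp (-(2 * (Real.pi : ℂ) * Complex.I * p)) *
        (Complex.exp (2 * (Real.pi : ℂ) * Complex.I * p * q))⁻¹ ^ 4 =
        Complex.I * Complex.exp (-(2 * (Real.pi : ℂ) * Complex.I * (-q))) := by
      conv_rhs => arg 1; rw [← hI]
      simp only [← Complex.exp_neg, ← Complex.exp_nat_mul, ← Complex.exp_add]
      congr 1
      push_cast
      ring
    have key2 : (s ^ 3) ^ 2 * (-Complex.I * μ * s) ^ 3 * s * (-Complex.I * μ * s)⁻¹ ^ 4 =
        Complex.I * μ ^ 2 := by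
      have hne : -Complex.I * μ * s ≠ 0 := by simp [h0, hs]
      have : (s ^ 3) ^ 2 * (-Complex.I * μ * s) ^ 3 * s * (-Complex.I * μ * s)⁻¹ ^ 4 =
        s ^ 6 * s * (-Complex.I * μ * s)⁻¹ := by field_simp
      rw [this, ← hs2]
      field_simp
      linear_combination - Complex.I_sq
    have fin (C T Qs t E0 E1 E2 A1 A2 A3 A4 A5 K L Q : ℂ)
        (k1 : (E0 * E1 * E2) ^ 2 * (A1 * A2 * A3) * A4 * A5 * A4⁻¹ ^ 4 = Complex.I * L)
        (k2 : (s ^ 3) ^ 2 * K ^ 3 * s * K⁻¹ ^ 4 = Complex.I * μ ^ 2) :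
        C * (T * (s ^ 3 * (E0 * E1 * E2))) ^ 2 * (Qs * (K ^ 3 * (A1 * A2 * A3))) * (s * A4 * t) * A5 *
          (K * A4 * Q)⁻¹ ^ 4 = -μ ^ 2 * (C * T ^ 2 * Qs * t * L * Q⁻¹ ^ 4) := by
      rw [mul_inv, mul_inv]
      linear_combination (C * T ^ 2 * Qs * t * Q⁻¹ ^ 4 * ((s ^ 3) ^ 2 * K ^ 3 * s * K⁻¹ ^ 4)) * k1 +
        (C * T ^ 2 * Qs * t * Q⁻¹ ^ 4 * Complex.I * L) * k2 +
        (C * T ^ 2 * Qs * t * Q⁻¹ ^ 4 * μ ^ 2 * L) * Complex.I_sq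
    have := fin (-(2 / ((Real.pi : ℂ) * Λ ^ 2 * Real.pi)))
      (theta (1 / 2) 0 μ * theta 0 0 μ * theta 0 (1 / 2) μ)
      (thetaQ (-q) (p + 1 / 2) μ * thetaQ (-q + 1 / 2) (p + 1 / 2) μ * thetaQ (-q + 1 / 2) p μ)
      (theta (-q) p μ) _ _ _ _ _ _ _ _ _ _ (thetaQ (-q) p μ) key key2
    rw [← this]
    ring

end
end

section
/- Let p, q ∈ ℂ and μ ∈ ℂ with Re μ > 0. Then: (i) w₁[p,q+1](iμ) = w₁[p,q](iμ), w₂[p,q+1](iμ) = −w₂[p,q](iμ), w₃[p,q+1](iμ) = −w₃[p,q](iμ), and F[p,q+1](iμ) = F[p,q](iμ); (ii) w₁[p+1,q](iμ) = −w₁[p,q](iμ), w₂[p+1,q](iμ) = −w₂[p,q](iμ), w₃[p+1,q](iμ) = w₃[p,q](iμ), and F[p+1,q](iμ) = F[p,q](iμ); consequently the coefficient ã₀[p,q](iμ) = 4F[p,q](iμ)²w₁[p,q](iμ)w₂[p,q](iμ)w₃[p,q](iμ) is periodic of period 1 in both parameters: ã₀[p,q+1](iμ) = ã₀[p+1,q](iμ)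 = ã₀[p,q](iμ). -/
noncomputable section

lemma exp_term_q (m : ℤ) (p q μ : ℂ) :
    Complex.exp (-(Real.pi : ℂ) * ((m : ℂ) + p) ^ 2 * μ +
      2 * (Real.pi : ℂ) * Complex.I * ((m : ℂ) + p) * (q + 1)) =
    Complex.exp (2 * (Real.pi : ℂ) * Complex.I * p) *
      Complex.exp (-(Real.pi : ℂ) * ((m : ℂ) + p) ^ 2 * μ +
        2 * (Real.pi : ℂ) * Complex.I * ((m : ℂ) + p) * q) := by
  have h1 := Complex.exp_int_mul_two_pi_mul_I m
  rw [← Complex.exp_add]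
  rw [show -(Real.pi : ℂ) * ((m : ℂ) + p) ^ 2 * μ +
      2 * (Real.pi : ℂ) * Complex.I * ((m : ℂ) + p) * (q + 1) =
      (2 * (Real.pi : ℂ) * Complex.I * p + (-(Real.pi : ℂ) * ((m : ℂ) + p) ^ 2 * μ +
        2 * (Real.pi : ℂ) * Complex.I * ((m : ℂ) + p) * q)) +
        (m : ℂ) * (2 * (Real.pi : ℂ) * Complex.I) by ring, Complex.exp_add, h1, mul_one]

lemma exp_half (p : ℂ) : Complex.exp (2 * (Real.pi : ℂ) * Complex.I * (p + 1 / 2)) =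
    -Complex.exp (2 * (Real.pi : ℂ) * Complex.I * p) := by
  rw [show 2 * (Real.pi : ℂ) * Complex.I * (p + 1 / 2) =
    2 * (Real.pi : ℂ) * Complex.I * p + Real.pi * Complex.I by ring, Complex.exp_add,
    Complex.exp_pi_mul_I]
  ring

lemma exp_one_shift (p : ℂ) : Complex.exp ((Real.pi : ℂ) * Complex.I * (p + 1)) =
    -Complex.exp ((Real.pi : ℂ) * Complex.I * p) := by
  rw [mul_add, Complex.exp_add, mul_one, Complex.exp_pi_mul_I]
  ring

/-- Lemma 8.1 (case n = 0): periodicity of `w₁, w₂, w₃, F` of the two-parametric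
family in the characteristics `p` and `q`, and the resulting periodicity of
`ã₀[p,q] = 4F²w₁w₂w₃` of period 1 in both parameters. -/
theorem statement19 (Λ : ℂ) (hΛ : Λ ≠ 0) (p q μ : ℂ) (hμ : 0 < μ.re) :
    (w1 p (q + 1) μ = w1 p q μ ∧
     w2 p (q + 1) μ = -w2 p q μ ∧
     w3 p (q + 1) μ = -w3 p q μ ∧
     Ftwo Λ p (q + 1) μ = Ftwo Λ p q μ) ∧
    (w1 (p + 1) q μ = -w1 p q μ ∧
     w2 (p + 1) q μ = -w2 p q μ ∧
     w3 (p + 1) q μ = w3 p q μ ∧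
     Ftwo Λ (p + 1) q μ = Ftwo Λ p q μ) ∧
    (a0two Λ p (q + 1) μ = a0two Λ p q μ ∧
     a0two Λ (p + 1) q μ = a0two Λ p q μ) := by
  have h1 : w1 p (q + 1) μ = w1 p q μ := by
    unfold w1
    rw [add_right_comm q 1, thetaQ_q, theta_q, mul_left_comm _ (Complex.exp _) (thetaQ _ _ _),
      mul_left_comm _ (Complex.exp _) (theta p q μ), mul_div_mul_left _ _ (Complex.exp_ne_zero _)]
  have h2 : w2 p (q + 1) μ = -w2 p q μ := by
    unfold w2
    rw [add_right_comm q 1, thetaQ_q, theta_q, exp_half, neg_mul, mul_neg, neg_div,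
      mul_left_comm _ (Complex.exp _) (thetaQ _ _ _),
      mul_left_comm _ (Complex.exp _) (theta p q μ), mul_div_mul_left _ _ (Complex.exp_ne_zero _)]
  have h3 : w3 p (q + 1) μ = -w3 p q μ := by
    unfold w3
    rw [thetaQ_q, theta_q, exp_half, neg_mul (Complex.exp _), mul_neg, neg_div,
      mul_left_comm _ (Complex.exp _) (thetaQ _ _ _), mul_div_mul_left _ _ (Complex.exp_ne_zero _)]
  have h4 : Ftwo Λ p (q + 1) μ = Ftwo Λ p q μ := by
    unfold Ftwo
    rw [thetaQ_q, theta_q, mul_div_mul_left _ _ (Complex.exp_ne_zero _)]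
  have k1 : w1 (p + 1) q μ = -w1 p q μ := by
    unfold w1
    rw [thetaQ_p, theta_p, exp_one_shift, neg_mul (Complex.exp _), div_neg]
  have k2 : w2 (p + 1) q μ = -w2 p q μ := by
    unfold w2
    rw [add_right_comm p 1, thetaQ_p, theta_p, exp_one_shift, neg_mul, div_neg]
  have k3 : w3 (p + 1) q μ = w3 p q μ := by
    unfold w3
    rw [add_right_comm p 1, thetaQ_p, theta_p]
  have k4 : Ftwo Λ (p + 1) q μ = Ftwo Λ p q μ := by
    unfold Ftwo
    rw [thetaQ_p, theta_p]
  refine ⟨⟨h1, h2, h3, h4⟩, ⟨k1, k2, k3, k4⟩, ?_, ?_⟩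
  · unfold a0two
    rw [h1, h2, h3, h4]
    ring
  · unfold a0two
    rw [k1, k2, k3, k4]
    ring

end
end
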